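/- Let d ≥ 1 be an integer, 0 < δ < 1 and ε > 0. If p is a real polynomial of degree n ≥ d such that for every x ∈ [−1,1] with |p(x)| < ε one has max_{1 ≤ j ≤ d} |p^{(j)}(x)| ≥ δ, then Leb{x ∈ [−1,1] : |p(x)| < ε} ≤ C · ε^{1/d}, where C := (2^{d+3}/δ²) · (4 n^{2(d+1)} · max_{x∈[−1,1]} |p(x)| + 1). -/

import Mathlib

open MeasureTheory Set Filter

noncomputable section

open Polynomial in
theorem aux_iter_comp (p : ℝ[X]) (a b : ℝ) (k : ℕ) :
    derivative^[k] (p.comp (C a * X + C b)) =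
      C (a ^ k) * (derivative^[k] p).comp (C a * X + C b) := by
  induction k with
  | zero => simp
  | succ k ih =>
    rw [Function.iterate_succ_apply', ih, Function.iterate_succ_apply', derivative_C_mul,
      derivative_comp]
    simp [pow_succ]
    ring

open Polynomial in
theorem aux_T_bound (n k : ℕ) (hk : 1 ≤ k) (hkn : k ≤ n) :
    2 ^ k * (derivative^[k] (Chebyshev.T ℝ n)).eval 1 ≤ 2 * (n : ℝ) ^ (2 * k) := by
  rw [Chebyshev.iterate_derivative_T_eval_one_eq_div]
  induction k, hk using Nat.le_induction with
  | base => simp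
  | succ k hk ih =>
    have ih := ih (by omega)
    push_cast at ih ⊢
    rw [Finset.prod_range_succ, Finset.prod_range_succ]
    have hln : (k : ℝ) ≤ n := by exact_mod_cast (by omega : k ≤ n)
    have hk1 : (1 : ℝ) ≤ k := by exact_mod_cast hk
    set A := ∏ x ∈ Finset.range k, ((n : ℝ) ^ 2 - (x : ℝ) ^ 2)
    set B := ∏ x ∈ Finset.range k, (2 * (x : ℝ) + 1)
    have e : (2 : ℝ) ^ (k + 1) * (A * ((n : ℝ) ^ 2 - (k : ℝ) ^ 2) / (B * (2 * k + 1))) =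
        (2 ^ k * (A / B)) * (2 * ((n : ℝ) ^ 2 - (k : ℝ) ^ 2) / (2 * k + 1)) := by
      rw [mul_div_mul_comm]; ring
    rw [e]
    have h1 : 0 ≤ 2 * ((n : ℝ) ^ 2 - (k : ℝ) ^ 2) / (2 * k + 1) := by
      apply div_nonneg
      · nlinarith
      · positivity
    have h2 : 2 * ((n : ℝ) ^ 2 - (k : ℝ) ^ 2) / (2 * k + 1) ≤ (n : ℝ) ^ 2 := by
      rw [div_le_iff₀ (by positivity)]
      nlinarith [sq_nonneg (n : ℝ), sq_nonneg (k : ℝ)]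
    calc _ ≤ (2 * (n : ℝ) ^ (2 * k)) * (n : ℝ) ^ 2 := by
          apply mul_le_mul ih h2 h1 (by positivity)
      _ = _ := by ring

open Polynomial in
theorem aux_end (p : ℝ[X]) (n k : ℕ) (M : ℝ) (hM : 0 < M) (hn : p.natDegree ≤ n)
    (hb : ∀ x ∈ Set.Icc (-1 : ℝ) 1, |p.eval x| ≤ M) :
    (derivative^[k] p).eval 1 ≤ M * (derivative^[k] (Chebyshev.T ℝ n)).eval 1 := by
  have h := Chebyshev.eval_iterate_derivative_le_of_forall_abs_le_one (n := n) (P := C M⁻¹ * p)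
    (k := k) (x := 1) le_rfl
    (by
      refine natDegree_le_iff_degree_le.mp ?_
      exact (natDegree_C_mul_le _ _).trans hn)
    (by
      intro x hx
      rw [eval_mul, eval_C, abs_mul, abs_of_pos (inv_pos.mpr hM), inv_mul_le_iff₀ hM]
      simpa using hb x hx)
  rw [iterate_derivative_C_mul, eval_mul, eval_C, inv_mul_le_iff₀ hM] at h
  exact h

open Polynomial in
theorem aux_markov (p : ℝ[X]) (n k : ℕ) (M : ℝ) (hM : 0 < M) (hn : p.natDegree ≤ n)
    (hk : 1 ≤ k)
    (hb : ∀ x ∈ Set.Icc (-1 : ℝ) 1, |p.eval x| ≤ M) (x : ℝ) (hx : x ∈ Set.Icc (-1 : ℝ) 1) :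
    |(derivative^[k] p).eval x| ≤ 2 * (n : ℝ) ^ (2 * k) * M := by
  by_cases hkn : n < k
  · rw [iterate_derivative_eq_zero (by omega)]
    simp; positivity
  push Not at hkn
  obtain ⟨a, b, hab, ha, hmap⟩ : ∃ a b : ℝ, a + b = x ∧ 1 / 2 ≤ |a| ∧
      ∀ t ∈ Set.Icc (-1 : ℝ) 1, a * t + b ∈ Set.Icc (-1 : ℝ) 1 := by
    obtain ⟨h1, h2⟩ := hx
    by_cases h0 : 0 ≤ x
    · refine ⟨(1 + x) / 2, (x - 1) / 2, by ring, ?_, ?_⟩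
      · rw [abs_of_nonneg (by linarith)]; linarith
      · rintro t ⟨ht1, ht2⟩
        constructor <;> nlinarith
    · refine ⟨(x - 1) / 2, (x + 1) / 2, by ring, ?_, ?_⟩
      · rw [abs_of_nonpos (by linarith)]; linarith
      · rintro t ⟨ht1, ht2⟩
        constructor <;> nlinarith
  have key : ∀ q : ℝ[X], q.natDegree ≤ n → (∀ x ∈ Set.Icc (-1 : ℝ) 1, |q.eval x| ≤ M) →
      a ^ k * (derivative^[k] q).eval x ≤ M * (derivative^[k] (Chebyshev.T ℝ n)).eval 1 := by
    intro q hq hqb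
    have h := aux_end (q.comp (C a * X + C b)) n k M hM
      (by
        refine natDegree_comp_le.trans ?_
        have : (C a * X + C b).natDegree ≤ 1 := natDegree_linear_le
        nlinarith)
      (by
        intro t ht
        simpa [eval_comp] using hqb _ (hmap t ht))
    rw [aux_iter_comp] at h
    simpa [eval_comp, hab] using h
  have k1 := key p hn hb
  have k2 := key (-p) (by simpa using hn) (by simpa using hb)
  rw [iterate_derivative_neg, eval_neg] at k2
  have k3 : |a| ^ k * |(derivative^[k] p).eval x| ≤
      M * (derivative^[k] (Chebyshev.T ℝ n)).eval 1 := by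
    rw [← abs_pow, ← abs_mul, abs_le]
    constructor <;> linarith
  have hT := aux_T_bound n k hk hkn
  have k4 : 1 ≤ 2 ^ k * |a| ^ k := by
    rw [← mul_pow]; exact one_le_pow₀ (by linarith)
  calc |(derivative^[k] p).eval x| ≤ (2 ^ k * |a| ^ k) * |(derivative^[k] p).eval x| :=
        le_mul_of_one_le_left (abs_nonneg _) k4
    _ = 2 ^ k * (|a| ^ k * |(derivative^[k] p).eval x|) := by ring
    _ ≤ 2 ^ k * (M * (derivative^[k] (Chebyshev.T ℝ n)).eval 1) := by gcongr
    _ = M * (2 ^ k * (derivative^[k] (Chebyshev.T ℝ n)).eval 1) := by ring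
    _ ≤ M * (2 * (n : ℝ) ^ (2 * k)) := by gcongr
    _ = _ := by ring

theorem aux_pts (h : ℝ) (hh : 0 ≤ h) (m : ℕ) : ∀ (E : Set ℝ), IsCompact E →
    ENNReal.ofReal (m * h) < volume E →
    ∃ x : ℕ → ℝ, (∀ i ≤ m, x i ∈ E) ∧ ∀ i < m, x i + h ≤ x (i + 1) := by
  induction m with
  | zero =>
    intro E hE hv
    obtain ⟨y, hy⟩ := nonempty_of_measure_ne_zero (bot_lt_iff_ne_bot.mp (lt_of_le_of_lt bot_le hv))
    exact ⟨fun _ => y, fun _ _ => hy, fun i hi => absurd hi (by simp)⟩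
  | succ m ih =>
    intro E hE hv
    have hne : E.Nonempty :=
      nonempty_of_measure_ne_zero (bot_lt_iff_ne_bot.mp (lt_of_le_of_lt bot_le hv))
    have hs : sInf E ∈ E := hE.sInf_mem hne
    set s := sInf E
    have hle : ∀ y ∈ E, s ≤ y := fun y hy => csInf_le hE.bddBelow hy
    have hsub : E ⊆ Set.Icc s (s + h) ∪ (E ∩ Set.Ici (s + h)) := by
      intro y hy
      rcases le_total y (s + h) with h1 | h1
      · exact Or.inl ⟨hle y hy, h1⟩
      · exact Or.inr ⟨hy, h1⟩
    have hv2 : ENNReal.ofReal (m * h) < volume (E ∩ Set.Ici (s + h)) := by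
      by_contra hc
      push Not at hc
      have : volume E ≤ ENNReal.ofReal ((m + 1 : ℕ) * h) := by
        calc volume E ≤ volume (Set.Icc s (s + h)) + volume (E ∩ Set.Ici (s + h)) :=
              (measure_mono hsub).trans (measure_union_le _ _)
          _ ≤ ENNReal.ofReal h + ENNReal.ofReal (m * h) := by
              gcongr
              rw [Real.volume_Icc]; simp
          _ = _ := by
              rw [← ENNReal.ofReal_add hh (by positivity)]
              congr 1; push_cast; ring
      exact absurd hv (not_lt.mpr this)
    obtain ⟨x, hx1, hx2⟩ := ih _ (hE.inter_right isClosed_Ici) hv2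
    refine ⟨fun i => Nat.casesOn i s x, ?_, ?_⟩
    · intro i hi
      cases i with
      | zero => exact hs
      | succ i => exact (hx1 i (by omega)).1
    · intro i hi
      cases i with
      | zero => exact (hx1 0 (by omega)).2
      | succ i => exact hx2 i (by omega)

open Polynomial in
theorem aux_mvt (a b h : ℝ) (hh : 0 < h) (j : ℕ) : ∀ (q : ℝ[X]) (ε : ℝ) (x : ℕ → ℝ),
    (∀ i < 2 ^ j, x i ∈ Set.Icc a b ∧ |q.eval (x i)| ≤ ε) →
    (∀ i, i + 1 < 2 ^ j → x i + h ≤ x (i + 1)) →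
    ∃ ξ ∈ Set.Icc a b, |(derivative^[j] q).eval ξ| ≤ ε * (2 / h) ^ j := by
  induction j with
  | zero =>
    intro q ε x h1 _
    exact ⟨x 0, (h1 0 (by simp)).1, by simpa using (h1 0 (by simp)).2⟩
  | succ j ih =>
    intro q ε x h1 h2
    have hy : ∀ i, ∃ y, i < 2 ^ j → (x (2 * i) ≤ y ∧ y ≤ x (2 * i + 1) ∧
        |(derivative q).eval y| ≤ ε * (2 / h)) := by
      intro i
      by_cases hi : i < 2 ^ j
      · have hp : 2 * i + 1 < 2 ^ (j + 1) := by rw [pow_succ]; omega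
        have hsp := h2 (2 * i) hp
        obtain ⟨y, hy, hy2⟩ := exists_hasDerivAt_eq_slope (fun t => q.eval t)
          (fun t => (derivative q).eval t) (a := x (2 * i)) (b := x (2 * i + 1)) (by linarith)
          q.continuous.continuousOn (fun t _ => q.hasDerivAt t)
        refine ⟨y, fun _ => ⟨hy.1.le, hy.2.le, ?_⟩⟩
        rw [hy2, abs_div, abs_of_pos (by linarith : 0 < x (2 * i + 1) - x (2 * i)),
          div_le_iff₀ (by linarith)]
        have b1 := (h1 _ hp).2
        have b2 := (h1 (2 * i) (by omega)).2
        have hε : 0 ≤ ε := (abs_nonneg _).trans b1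
        calc _ ≤ |q.eval (x (2 * i + 1))| + |q.eval (x (2 * i))| := abs_sub _ _
          _ ≤ 2 * ε := by linarith
          _ = ε * (2 / h) * h := by field_simp
          _ ≤ _ := by
            apply mul_le_mul_of_nonneg_left (by linarith) (by positivity)
      · exact ⟨0, fun h => absurd h hi⟩
    choose y hy using hy
    obtain ⟨ξ, hξ, hb⟩ := ih (derivative q) (ε * (2 / h)) y
      (by
        intro i hi
        have hp : 2 * i + 1 < 2 ^ (j + 1) := by rw [pow_succ]; omega
        obtain ⟨u, v, w⟩ := hy i hi
        exact ⟨⟨(h1 (2 * i) (by omega)).1.1.trans u, v.trans (h1 _ hp).1.2⟩, w⟩)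
      (by
        intro i hi
        have hp : 2 * i + 1 + 1 < 2 ^ (j + 1) := by rw [pow_succ]; omega
        have e1 := (hy i (by omega)).2.1
        have e2 := (hy (i + 1) hi).1
        have e3 := h2 (2 * i + 1) hp
        have : 2 * (i + 1) = 2 * i + 1 + 1 := by ring
        rw [this] at e2
        linarith)
    refine ⟨ξ, hξ, ?_⟩
    rw [Function.iterate_succ_apply]
    refine hb.trans (le_of_eq ?_)
    ring

open Polynomial in
theorem aux_sub (q : ℝ[X]) (a b ε l : ℝ) (j : ℕ) (hj : 1 ≤ j) (hε : 0 < ε) (hl : 0 < l)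
    (hq : ∀ x ∈ Set.Icc a b, l ≤ |(derivative^[j] q).eval x|) :
    volume {x ∈ Set.Icc a b | |q.eval x| ≤ ε} ≤
      ENNReal.ofReal (2 ^ (j + 1) * (ε / l) ^ ((j : ℝ)⁻¹)) := by
  by_contra hc
  push Not at hc
  set t := (ε / l) ^ ((j : ℝ)⁻¹) with ht
  have ht0 : 0 < t := by positivity
  have htj : t ^ j = ε / l := by
    rw [ht]; exact Real.rpow_inv_natCast_pow (by positivity) (by omega)
  have hcomp : IsCompact {x ∈ Set.Icc a b | |q.eval x| ≤ ε} := by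
    have : {x ∈ Set.Icc a b | |q.eval x| ≤ ε} = Set.Icc a b ∩ {x | |q.eval x| ≤ ε} := rfl
    rw [this]
    exact isCompact_Icc.inter_right (isClosed_le q.continuous.abs continuous_const)
  have h2j : 2 ≤ 2 ^ j := by
    calc 2 = 2 ^ 1 := by norm_num
      _ ≤ 2 ^ j := Nat.pow_le_pow_right (by norm_num) hj
  obtain ⟨m, hm⟩ : ∃ m, 2 ^ j = m + 1 := ⟨2 ^ j - 1, by omega⟩
  have hm1 : (0 : ℝ) < m := by
    have : 0 < m := by omega
    exact_mod_cast this
  have hmR : (2 : ℝ) ^ j = m + 1 := by exact_mod_cast hm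
  set h := 2 ^ (j + 1) * t / m with hh
  have hlt : 2 * t < h := by
    rw [hh, lt_div_iff₀ hm1, pow_succ, hmR]; nlinarith
  have hh0 : 0 < h := by linarith
  obtain ⟨x, hx1, hx2⟩ := aux_pts h hh0.le m _ hcomp (by
    rwa [hh, mul_div_cancel₀ _ hm1.ne'])
  obtain ⟨ξ, hξ, hb⟩ := aux_mvt a b h hh0 j q ε x (fun i hi => hx1 i (by omega))
    (fun i hi => hx2 i (by omega))
  have hlow := hq ξ hξ
  have : ε * (2 / h) ^ j < l := by
    calc ε * (2 / h) ^ j < ε * (1 / t) ^ j := by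
          apply mul_lt_mul_of_pos_left _ hε
          apply pow_lt_pow_left₀ _ (by positivity) (by omega)
          rw [div_lt_div_iff₀ hh0 ht0]; linarith
      _ = l := by
          rw [div_pow, htj]; field_simp
          simp
  linarith

theorem aux_cell (m : ℕ) (hm : 0 < m) (x : ℝ) (hx : x ∈ Set.Icc (-1 : ℝ) 1) :
    ∃ i ∈ Finset.range m, x ∈ Set.Icc (-1 + i * (2 / m : ℝ)) (-1 + (i + 1) * (2 / m : ℝ)) := by
  have hmR : (0 : ℝ) < m := by exact_mod_cast hm
  obtain ⟨h1, h2⟩ := hx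
  rcases h2.lt_or_eq with h3 | h3
  · have hnn : 0 ≤ (x + 1) * m / 2 := div_nonneg (mul_nonneg (by linarith) hmR.le) (by norm_num)
    refine ⟨⌊(x + 1) * m / 2⌋₊, ?_, ?_, ?_⟩
    · rw [Finset.mem_range, Nat.floor_lt hnn]; nlinarith
    · have := Nat.floor_le hnn
      have e : (⌊(x + 1) * m / 2⌋₊ : ℝ) * (2 / m) ≤ ((x + 1) * m / 2) * (2 / m) := by gcongr
      have e2 : ((x + 1) * m / 2) * (2 / m) = x + 1 := by field_simp
      linarith
    · have := (Nat.lt_floor_add_one ((x + 1) * m / 2)).le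
      have e : ((x + 1) * m / 2) * (2 / m) ≤ ((⌊(x + 1) * m / 2⌋₊ : ℝ) + 1) * (2 / m) := by gcongr
      have e2 : ((x + 1) * m / 2) * (2 / m) = x + 1 := by field_simp
      linarith
  · refine ⟨m - 1, by simp [hm], ?_⟩
    rw [Nat.cast_sub (by omega), h3]
    have e : ((m : ℝ)) * (2 / m) = 2 := by field_simp
    have : 0 < 2 / (m : ℝ) := by positivity
    constructor <;> push_cast <;> linarith

/-- Łojasiewicz-type inequality for real polynomials on `[-1,1]`: if whenever
`|p(x)| < ε` some derivative `p⁽ʲ⁾(x)`, `1 ≤ j ≤ d`, is at least `δ` in absolute value,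
then `Leb {x ∈ [-1,1] : |p(x)| < ε} ≤ C ε^(1/d)` with
`C = (2^(d+3)/δ²)(4 n^(2(d+1)) max_{[-1,1]} |p| + 1)`. -/
theorem lojasiewicz_polynomial (d n : ℕ) (hd : 1 ≤ d) (δ ε : ℝ)
    (hδ0 : 0 < δ) (hδ1 : δ < 1) (hε : 0 < ε)
    (p : Polynomial ℝ) (hdeg : p.natDegree = n) (hnd : d ≤ n)
    (hyp : ∀ x ∈ Set.Icc (-1 : ℝ) 1, |Polynomial.eval x p| < ε →
      ∃ j : ℕ, 1 ≤ j ∧ j ≤ d ∧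
        δ ≤ |iteratedDeriv j (fun y : ℝ => Polynomial.eval y p) x|) :
    volume {x ∈ Set.Icc (-1 : ℝ) 1 | |Polynomial.eval x p| < ε} ≤
      ENNReal.ofReal ((2 ^ (d + 3) / δ ^ 2 *
          (4 * (n : ℝ) ^ (2 * (d + 1)) *
              sSup ((fun x : ℝ => |Polynomial.eval x p|) '' Set.Icc (-1 : ℝ) 1) + 1)) *
        ε ^ ((d : ℝ)⁻¹)) := by
  have hiter : ∀ j : ℕ, iteratedDeriv j (fun y : ℝ => Polynomial.eval y p) =
      fun x => (Polynomial.derivative^[j] p).eval x := by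
    intro j
    induction j with
    | zero => simp
    | succ j ih =>
      rw [iteratedDeriv_succ, ih, Function.iterate_succ_apply']
      funext x
      exact Polynomial.deriv _
  simp only [hiter] at hyp
  set M := sSup ((fun x : ℝ => |Polynomial.eval x p|) '' Set.Icc (-1 : ℝ) 1) with hMdef
  have hb : ∀ x ∈ Set.Icc (-1 : ℝ) 1, |p.eval x| ≤ M := by
    intro x hx
    exact le_csSup (isCompact_Icc.image p.continuous.abs).bddAbove ⟨x, hx, rfl⟩
  have hM0 : 0 < M := by
    by_contra hc
    push Not at hc
    have hp0 : p = 0 := by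
      apply Polynomial.eq_zero_of_infinite_isRoot
      refine (Set.Icc_infinite (by norm_num : (-1 : ℝ) < 1)).mono ?_
      intro x hx
      have := (hb x hx).trans hc
      exact abs_nonpos_iff.mp this
    rw [hp0] at hdeg
    simp at hdeg
    omega
  have hn1 : (1 : ℝ) ≤ n := by exact_mod_cast hd.trans hnd
  set N := (n : ℝ) ^ (2 * (d + 1)) with hN
  have hN1 : 1 ≤ N := one_le_pow₀ hn1
  have h2d : (1 : ℝ) ≤ 2 ^ d := one_le_pow₀ (by norm_num)
  have hdinv : 0 < (d : ℝ)⁻¹ := by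
    have : (0 : ℝ) < d := by exact_mod_cast hd
    positivity
  have hNM : 0 < N * M := by positivity
  rcases le_or_gt 1 ε with hε1 | hε1
  · calc _ ≤ volume (Set.Icc (-1 : ℝ) 1) := measure_mono (fun x hx => hx.1)
      _ = ENNReal.ofReal 2 := by rw [Real.volume_Icc]; norm_num
      _ ≤ _ := by
        apply ENNReal.ofReal_le_ofReal
        have e1 : 1 ≤ ε ^ ((d : ℝ)⁻¹) := Real.one_le_rpow hε1 hdinv.le
        have e2 : (2 : ℝ) ≤ 2 ^ (d + 3) / δ ^ 2 := by
          rw [le_div_iff₀ (by positivity), pow_add]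
          nlinarith
        have e3 : 1 ≤ 4 * N * M + 1 := by nlinarith
        calc (2 : ℝ) = 2 * 1 * 1 := by norm_num
          _ ≤ _ := by gcongr
  set K := 2 * N * M with hK
  have hK0 : 0 < K := by positivity
  set m := ⌈4 * K / δ⌉₊ with hm
  have hm0 : 0 < m := Nat.ceil_pos.mpr (by positivity)
  have hmR : (0 : ℝ) < m := by exact_mod_cast hm0
  have hm1 : 4 * K / δ ≤ m := Nat.le_ceil _
  have hm2 : (m : ℝ) ≤ 4 * K / δ + 1 := (Nat.ceil_lt_add_one (by positivity)).le
  set B := 2 ^ (d + 1) * (2 / δ * ε ^ ((d : ℝ)⁻¹)) with hB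
  have hB0 : 0 ≤ B := by positivity
  have hlen : K * (2 / m) ≤ δ / 2 := by
    rw [div_le_iff₀ hδ0] at hm1
    rw [← mul_div_assoc, div_le_iff₀ hmR]
    linarith
  set E := {x ∈ Set.Icc (-1 : ℝ) 1 | |Polynomial.eval x p| < ε} with hE
  have hcell : ∀ i ∈ Finset.range m,
      volume (E ∩ Set.Icc (-1 + i * (2 / m : ℝ)) (-1 + (i + 1) * (2 / m : ℝ))) ≤
        ENNReal.ofReal B := by
    intro i hi
    set a := -1 + i * (2 / m : ℝ) with ha
    set b := -1 + (i + 1) * (2 / m : ℝ) with hb'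
    have hab : b - a = 2 / m := by rw [ha, hb']; ring
    have hi' : (i : ℝ) + 1 ≤ m := by exact_mod_cast Finset.mem_range.mp hi
    have hsub : Set.Icc a b ⊆ Set.Icc (-1 : ℝ) 1 := by
      apply Set.Icc_subset_Icc
      · have : 0 ≤ i * (2 / m : ℝ) := by positivity
        linarith
      · have : ((i : ℝ) + 1) * (2 / m) ≤ m * (2 / m) := by gcongr
        have e : (m : ℝ) * (2 / m) = 2 := by field_simp
        linarith
    rcases (E ∩ Set.Icc a b).eq_empty_or_nonempty with hem | ⟨x, ⟨hx1, hx2⟩, hx3⟩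
    · rw [hem]; simp
    obtain ⟨j, hj1, hjd, hjδ⟩ := hyp x hx1 hx2
    have hlow : ∀ y ∈ Set.Icc a b, δ / 2 ≤ |(Polynomial.derivative^[j] p).eval y| := by
      intro y hy
      have hlip := (convex_Icc (-1 : ℝ) 1).norm_image_sub_le_of_norm_hasDerivWithin_le
        (f := fun t => (Polynomial.derivative^[j] p).eval t)
        (f' := fun t => (Polynomial.derivative^[j + 1] p).eval t) (C := K)
        (fun t _ => by
          rw [Function.iterate_succ_apply']
          exact (Polynomial.hasDerivAt _ t).hasDerivWithinAt)
        (fun t ht => by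
          have h1 := aux_markov p n (j + 1) M hM0 hdeg.le (by omega) hb t ht
          rw [Real.norm_eq_abs]
          refine h1.trans ?_
          rw [hK, hN]
          gcongr)
        hx1 (hsub hy)
      simp only [Real.norm_eq_abs] at hlip
      have hxy : |y - x| ≤ 2 / m := by
        rw [abs_le]; constructor <;> linarith [hx3.1, hx3.2, hy.1, hy.2]
      have h3 : K * |y - x| ≤ K * (2 / m) := by gcongr
      have h4 := abs_sub_abs_le_abs_sub ((Polynomial.derivative^[j] p).eval x)
        ((Polynomial.derivative^[j] p).eval y)
      rw [abs_sub_comm] at h4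
      linarith
    calc _ ≤ volume {x ∈ Set.Icc a b | |p.eval x| ≤ ε} :=
          measure_mono (fun y hy => ⟨hy.2, hy.1.2.le⟩)
      _ ≤ _ := aux_sub p a b ε (δ / 2) j hj1 hε (by positivity) hlow
      _ ≤ _ := by
        apply ENNReal.ofReal_le_ofReal
        rw [hB]
        have hjR : (1 : ℝ) ≤ j := by exact_mod_cast hj1
        have hjdR : (j : ℝ) ≤ d := by exact_mod_cast hjd
        have hdiv : ε / (δ / 2) = 2 / δ * ε := by field_simp
        rw [hdiv, Real.mul_rpow (by positivity) hε.le]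
        have e1 : (2 / δ) ^ ((j : ℝ)⁻¹) ≤ 2 / δ := by
          have : (1 : ℝ) ≤ 2 / δ := by rw [le_div_iff₀ hδ0]; linarith
          calc _ ≤ (2 / δ) ^ (1 : ℝ) :=
                Real.rpow_le_rpow_of_exponent_le this (inv_le_one_of_one_le₀ hjR)
            _ = _ := Real.rpow_one _
        have e2 : ε ^ ((j : ℝ)⁻¹) ≤ ε ^ ((d : ℝ)⁻¹) := by
          apply Real.rpow_le_rpow_of_exponent_ge hε hε1.le
          gcongr
        have e3 : (2 : ℝ) ^ (j + 1) ≤ 2 ^ (d + 1) := by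
          apply pow_le_pow_right₀ (by norm_num); omega
        gcongr
  calc volume E ≤ volume (⋃ i ∈ Finset.range m,
        E ∩ Set.Icc (-1 + i * (2 / m : ℝ)) (-1 + (i + 1) * (2 / m : ℝ))) := by
        apply measure_mono
        intro x hx
        obtain ⟨i, hi, hxi⟩ := aux_cell m hm0 x hx.1
        simp only [Set.mem_iUnion]
        exact ⟨i, hi, hx, hxi⟩
    _ ≤ ∑ i ∈ Finset.range m,
        volume (E ∩ Set.Icc (-1 + i * (2 / m : ℝ)) (-1 + (i + 1) * (2 / m : ℝ))) :=
        measure_biUnion_finset_le _ _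
    _ ≤ ∑ i ∈ Finset.range m, ENNReal.ofReal B := Finset.sum_le_sum hcell
    _ = ENNReal.ofReal (m * B) := by
        rw [Finset.sum_const, Finset.card_range, nsmul_eq_mul,
          ENNReal.ofReal_mul (p := (m : ℝ)) hmR.le, ENNReal.ofReal_natCast]
    _ ≤ _ := by
        apply ENNReal.ofReal_le_ofReal
        have h1 : (m : ℝ) ≤ 2 * (4 * N * M + 1) / δ := by
          refine hm2.trans ?_
          rw [hK, div_add_one hδ0.ne']
          gcongr
          nlinarith
        calc (m : ℝ) * B ≤ 2 * (4 * N * M + 1) / δ * B := by gcongr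
          _ = _ := by
            rw [hB]; field_simp; ring
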